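/- For every integer t ≥ 4, the identity w_3·w_4^{2^{t-1}-2} = g_{2^{t+1}-5} + w_2^{2^{t-1}}·g_{2^t-5} + w_3^{2^{t-1}}·g_{2^{t-1}-5} holds in the polynomial ring F_2[w_2,w_3,w_4]. -/

import Mathlib

open MvPolynomial

/-- The polynomials `g_r = g_r^{(4)}` in `F_2[w_2,w_3,w_4]` (variables `X 0 = w_2`,
`X 1 = w_3`, `X 2 = w_4`): `g_0 = 1`, `g_r = 0` for `r < 0`, and
`g_r = w_2·g_{r-2} + w_3·g_{r-3} + w_4·g_{r-4}` for `r ≥ 1`. -/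
noncomputable def g4 : ℤ → MvPolynomial (Fin 3) (ZMod 2)
  | r =>
    if r ≤ 0 then (if r = 0 then 1 else 0)
    else X 0 * g4 (r - 2) + X 1 * g4 (r - 3) + X 2 * g4 (r - 4)
  termination_by r => r.toNat
  decreasing_by all_goals omega

/-- The ideal `I_{n,4} = (g_{n-3}, g_{n-2}, g_{n-1}, g_n)` of `F_2[w_2,w_3,w_4]`. -/
noncomputable def I4 (n : ℤ) : Ideal (MvPolynomial (Fin 3) (ZMod 2)) :=
  Ideal.span {g4 (n - 3), g4 (n - 2), g4 (n - 1), g4 n}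

lemma g4_neg (r : ℤ) (h : r < 0) : g4 r = 0 := by
  rw [g4, if_pos (by omega), if_neg (by omega)]

lemma g4_zero : g4 0 = 1 := by
  rw [g4]; simp

lemma g4_pos (r : ℤ) (h : 0 < r) :
    g4 r = X 0 * g4 (r - 2) + X 1 * g4 (r - 3) + X 2 * g4 (r - 4) := by
  rw [g4, if_neg (by omega)]

noncomputable def GG : PowerSeries (MvPolynomial (Fin 3) (ZMod 2)) :=
  PowerSeries.mk fun n => g4 (n : ℤ)

noncomputable def PP : Polynomial (MvPolynomial (Fin 3) (ZMod 2)) :=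
  1 + Polynomial.C (X 0) * Polynomial.X ^ 2 + Polynomial.C (X 1) * Polynomial.X ^ 3
    + Polynomial.C (X 2) * Polynomial.X ^ 4

lemma coeff_GG (a : MvPolynomial (Fin 3) (ZMod 2)) (k n : ℕ) :
    PowerSeries.coeff n (PowerSeries.C a * PowerSeries.X ^ k * GG) = a * g4 ((n : ℤ) - k) := by
  rw [mul_assoc, PowerSeries.coeff_C_mul, PowerSeries.coeff_X_pow_mul']
  split_ifs with h
  · simp only [GG, PowerSeries.coeff_mk]
    rw [Nat.cast_sub h]
  · rw [g4_neg _ (by omega)]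

lemma coeff_GG0 (n : ℕ) : PowerSeries.coeff n GG = g4 n := by
  simp [GG]

lemma two_zero (a : MvPolynomial (Fin 3) (ZMod 2)) : a + a = 0 := CharTwo.add_self_eq_zero a

lemma PP_mul_GG : (PP : PowerSeries (MvPolynomial (Fin 3) (ZMod 2))) * GG = 1 := by
  ext1 n
  simp only [PP, Polynomial.coe_add, Polynomial.coe_mul, Polynomial.coe_pow, Polynomial.coe_C,
    Polynomial.coe_X, Polynomial.coe_one, add_mul, one_mul, map_add, coeff_GG, coeff_GG0]
  rw [PowerSeries.coeff_one]
  split_ifs with h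
  · subst h
    simp [g4_neg, g4_zero]
  · rw [g4_pos n (by omega)]
    push_cast
    set u := X 0 * g4 ((n : ℤ) - 2)
    set v := X 1 * g4 ((n : ℤ) - 3)
    set w := X 2 * g4 ((n : ℤ) - 4)
    linear_combination two_zero u + two_zero v + two_zero w

lemma PP_deg : PP.natDegree ≤ 4 := by
  unfold PP; compute_degree

lemma PP_pow_deg (n : ℕ) : (PP ^ n).natDegree ≤ 4 * n := by
  have := Polynomial.natDegree_pow_le_of_le n PP_deg
  omega

lemma coeff_mul_PP (A : Polynomial (MvPolynomial (Fin 3) (ZMod 2))) (m : ℕ) :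
    (A * PP).coeff (m + 4) = A.coeff (m + 4) + A.coeff (m + 2) * X 0 + A.coeff (m + 1) * X 1
      + A.coeff m * X 2 := by
  have e : A * PP = A + A * Polynomial.C (X 0) * Polynomial.X ^ 2
    + A * Polynomial.C (X 1) * Polynomial.X ^ 3
    + A * Polynomial.C (X 2) * Polynomial.X ^ 4 := by unfold PP; ring
  rw [e]
  simp only [Polynomial.coeff_add]
  rw [Polynomial.coeff_mul_X_pow, show m + 4 = (m + 2) + 2 from rfl, Polynomial.coeff_mul_X_pow,
    show m + 2 + 2 = (m + 1) + 3 from rfl, Polynomial.coeff_mul_X_pow]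
  simp only [Polynomial.coeff_mul_C]

lemma coeff_top (n : ℕ) : (PP ^ n).coeff (4 * n) = X 2 ^ n := by
  induction n with
  | zero => simp
  | succ n ih =>
    have d := PP_pow_deg n
    rw [pow_succ, show 4 * (n + 1) = 4 * n + 4 by ring, coeff_mul_PP, ih,
      Polynomial.coeff_eq_zero_of_natDegree_lt (by omega),
      Polynomial.coeff_eq_zero_of_natDegree_lt (by omega),
      Polynomial.coeff_eq_zero_of_natDegree_lt (by omega)]
    ring

lemma coeff_next (n : ℕ) : (PP ^ (n + 1)).coeff (4 * n + 3) =
    ((n : MvPolynomial (Fin 3) (ZMod 2)) + 1) * X 1 * X 2 ^ n := by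
  induction n with
  | zero => simp [PP, Polynomial.coeff_one, Polynomial.coeff_X_pow]
  | succ n ih =>
    have d := PP_pow_deg (n + 1)
    have h := coeff_top (n + 1)
    rw [pow_succ, show 4 * (n + 1) + 3 = (4 * n + 3) + 4 by ring, coeff_mul_PP, ih,
      Polynomial.coeff_eq_zero_of_natDegree_lt (by omega),
      Polynomial.coeff_eq_zero_of_natDegree_lt (by omega),
      show 4 * n + 3 + 1 = 4 * (n + 1) by ring, h]
    push_cast
    ring

lemma PP_pow_two (s : ℕ) : PP ^ 2 ^ s = 1 + Polynomial.C (X 0 ^ 2 ^ s) * Polynomial.X ^ (2 * 2 ^ s)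
    + Polynomial.C (X 1 ^ 2 ^ s) * Polynomial.X ^ (3 * 2 ^ s)
    + Polynomial.C (X 2 ^ 2 ^ s) * Polynomial.X ^ (4 * 2 ^ s) := by
  unfold PP
  rw [add_pow_char_pow (p := 2), add_pow_char_pow (p := 2), add_pow_char_pow (p := 2)]
  simp only [one_pow, mul_pow, ← pow_mul, Polynomial.C_pow]

theorem stmt10 (t : ℕ) (ht : 4 ≤ t) :
    (X 1 : MvPolynomial (Fin 3) (ZMod 2)) * X 2 ^ (2 ^ (t - 1) - 2) =
      g4 (2 ^ (t + 1) - 5) + X 0 ^ 2 ^ (t - 1) * g4 (2 ^ t - 5)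
        + X 1 ^ 2 ^ (t - 1) * g4 (2 ^ (t - 1) - 5) := by
  obtain ⟨s, rfl⟩ : ∃ s, t = s + 1 := ⟨t - 1, by omega⟩
  obtain ⟨k, hk⟩ : ∃ k, 2 ^ s = 2 * k + 2 := by
    obtain ⟨j, rfl⟩ : ∃ j, s = j + 1 := ⟨s - 1, by omega⟩
    have := Nat.one_le_two_pow (n := j)
    exact ⟨2 ^ j - 1, by rw [pow_succ]; omega⟩
  have hz : (2 : ℤ) ^ s = 2 * k + 2 := by exact_mod_cast hk
  have key : ((PP ^ 2 ^ s : Polynomial _) : PowerSeries (MvPolynomial (Fin 3) (ZMod 2))) * GG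
      = ((PP ^ (2 * k + 1) : Polynomial _) : PowerSeries _) := by
    rw [hk, show 2 * k + 2 = 2 * k + 1 + 1 from rfl, pow_succ, Polynomial.coe_mul, mul_assoc,
      PP_mul_GG, mul_one]
  have h2 := congrArg (PowerSeries.coeff (4 * (2 * k) + 3)) key
  rw [Polynomial.coeff_coe, coeff_next, PP_pow_two] at h2
  simp only [Polynomial.coe_add, Polynomial.coe_mul, Polynomial.coe_pow, Polynomial.coe_C,
    Polynomial.coe_X, Polynomial.coe_one, add_mul, one_mul, map_add, coeff_GG, coeff_GG0] at h2
  rw [g4_neg (_ - ((4 * 2 ^ s : ℕ) : ℤ)) (by push_cast; rw [hz]; omega)] at h2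
  simp only [Nat.add_sub_cancel]
  rw [show (2 : ℤ) ^ (s + 1 + 1) - 5 = ((4 * (2 * k) + 3 : ℕ) : ℤ) by
      rw [pow_succ, pow_succ, hz]; push_cast; ring,
    show (2 : ℤ) ^ (s + 1) - 5 = ((4 * (2 * k) + 3 : ℕ) : ℤ) - ((2 * 2 ^ s : ℕ) : ℤ) by
      rw [pow_succ]; push_cast; rw [hz]; ring,
    show (2 : ℤ) ^ s - 5 = ((4 * (2 * k) + 3 : ℕ) : ℤ) - ((3 * 2 ^ s : ℕ) : ℤ) by
      push_cast; rw [hz]; ring,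
    show 2 ^ s - 2 = 2 * k by omega]
  have h3 : ((2 * k : ℕ) : MvPolynomial (Fin 3) (ZMod 2)) = 0 := by
    rw [two_mul, Nat.cast_add]; exact two_zero _
  rw [h3, mul_zero, add_zero, zero_mul, zero_mul, zero_add] at h2
  exact h2.symm
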